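/- arXiv:1010.5435 — 2 statements merged into one kernel-verified Lean document; each statement's English description precedes it below -/
import Mathlib

section
/- Let Ω ⊂ ℝⁿ be a closed axis-aligned box (so the divergence theorem applies on Ω), and let F[Φ] := ∫_Ω L(x, Φ(x), ∂Φ(x), …, ∂^NΦ(x)) dⁿx. Then for every smooth variation δΦ_B : ℝⁿ → ℝ, the Gateaux derivative d/dε|_{ε=0} F[Φ + ε δΦ] equals ∫_Ω Σ_{B=1}^{f} δΦ_B(x) E_B(x) dⁿx + ∫_{∂Ω} n_λ(x) Σ_{B=1}^{f} Σ_{Z=0}^{N−1} (∂_{ν₁}⋯∂_{ν_Z} δΦ_B)(x) K^{Bλν₁…ν_Z}(x) ds(x), where n is the outward unit normal on ∂Ω and ds the surface measure. -/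
open scoped BigOperators

/-- Index of a jet variable: derivative order `X ≤ N`, field index `B`,
and a multi-index of coordinate directions of length `X`. -/
abbrev JIdx (n f N : ℕ) : Type := Σ X : Fin (N + 1), Fin f × (Fin (X : ℕ) → Fin n)

/-- The (finite-dimensional) space of jet variables `q = (q^X_{B,λ₁…λ_X})`. -/
abbrev Jet (n f N : ℕ) : Type := JIdx n f N → ℝ

/-- Partial derivative in the `i`-th coordinate direction. -/
noncomputable def pd {n : ℕ} (i : Fin n) (F : (Fin n → ℝ) → ℝ) (x : Fin n → ℝ) : ℝ :=
  fderiv ℝ F x (Pi.single i 1)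

/-- Iterated partial derivative along a list of coordinate directions. -/
noncomputable def pds {n : ℕ} : List (Fin n) → ((Fin n → ℝ) → ℝ) → (Fin n → ℝ) → ℝ
  | [], F => F
  | i :: l, F => pd i (pds l F)

/-- The `N`-jet of the family of fields `Φ` at the point `x`:
the collection `(Φ_B(x), ∂Φ_B(x), …, ∂^N Φ_B(x))`. -/
noncomputable def jet {n f N : ℕ} (Φ : Fin f → (Fin n → ℝ) → ℝ) (x : Fin n → ℝ) :
    Jet n f N :=
  fun idx => pds (List.ofFn idx.2.2) (Φ idx.2.1) x

/-- `∂L/∂q_idx` evaluated along the jet of `Φ`. -/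
noncomputable def dLdq {n f N : ℕ} (L : (Fin n → ℝ) → Jet n f N → ℝ)
    (Φ : Fin f → (Fin n → ℝ) → ℝ) (idx : JIdx n f N) (x : Fin n → ℝ) : ℝ :=
  fderiv ℝ (L x) (jet Φ x) (Pi.single idx 1)

/-- The jet with the multi-index of the order-`X` variables permuted by `σ`. -/
def permJet {n f N : ℕ} (X : Fin (N + 1)) (σ : Equiv.Perm (Fin (X : ℕ)))
    (q : Jet n f N) : Jet n f N :=
  fun idx =>
    if h : idx.1 = X then
      q ⟨idx.1, idx.2.1, fun i =>
        idx.2.2 (Fin.cast (congrArg Fin.val h).symm (σ (Fin.cast (congrArg Fin.val h) i)))⟩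
    else q idx

/-- The Euler–Lagrange expression `E_B(x)`. -/
noncomputable def EulerLagrange {n f N : ℕ} (L : (Fin n → ℝ) → Jet n f N → ℝ)
    (Φ : Fin f → (Fin n → ℝ) → ℝ) (B : Fin f) (x : Fin n → ℝ) : ℝ :=
  ∑ X : Fin (N + 1), ∑ lam : Fin (X : ℕ) → Fin n,
    (-1 : ℝ) ^ (X : ℕ) * pds (List.ofFn lam) (dLdq L Φ ⟨X, B, lam⟩) x

/-- The coefficients `K^{Bλν₁…ν_Z}(x)` of the boundary/divergence term. -/
noncomputable def Kcur {n f N : ℕ} (L : (Fin n → ℝ) → Jet n f N → ℝ)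
    (Φ : Fin f → (Fin n → ℝ) → ℝ) (B : Fin f) (lam : Fin n) (Z : Fin N)
    (nu : Fin (Z : ℕ) → Fin n) (x : Fin n → ℝ) : ℝ :=
  ∑ Y : Fin (N - (Z : ℕ)), ∑ mu : Fin (Y : ℕ) → Fin n,
    (-1 : ℝ) ^ (Y : ℕ) *
      pds (List.ofFn mu)
        (dLdq L Φ
          ⟨⟨1 + (Y : ℕ) + (Z : ℕ), by have h1 := Y.isLt; have h2 := Z.isLt; omega⟩, B,
            Fin.append (Fin.append (fun _ : Fin 1 => lam) mu) nu⟩) x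

/-! Differentiating under the integral sign gives `∫ Σ (∂L/∂q^X_{B,λ}) ∂_λ δΦ_B`. By the product
rule, moving a single derivative off `δΦ` changes the sign of the pairing and releases a divergence;
the symmetry of `∂L/∂q` in its coordinate indices makes it irrelevant which derivative is moved.
Summed over the number `Y` of derivatives already moved and the number `Z` that remain, the
differences telescope along `Y + Z = const`, so the integrand equals `Σ_B δΦ_B E_B` plus the
divergence of `Σ_B Σ_Z ∂_ν δΦ_B K^{Bλν}`, and the divergence theorem sends the latter to the faces
of the box. -/

section General

open MeasureTheory

theorem exists_eq_comp_perm_of_ofFn_perm {α : Type*} {k : ℕ} {u v : Fin k → α}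
    (h : (List.ofFn u).Perm (List.ofFn v)) : ∃ σ : Equiv.Perm (Fin k), u = v ∘ σ := by
  classical
  let e : Fin (List.ofFn u).length ≃ Fin (List.ofFn v).length :=
    ⟨h.idxBij, h.symm.idxBij, h.idxBij_rightInverse_idxBij_symm, h.idxBij_leftInverse_idxBij_symm⟩
  refine ⟨(finCongr List.length_ofFn.symm).trans (e.trans (finCongr List.length_ofFn)),
    funext fun i => ?_⟩
  have get_eq := h.getElem_idxBij_eq_getElem (Fin.cast List.length_ofFn.symm i)
  simp only [List.getElem_ofFn] at get_eq
  exact get_eq.symm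

theorem sum_pi_fin_succ {α M : Type*} [Fintype α] [AddCommMonoid M] {k : ℕ}
    (g : (Fin (k + 1) → α) → M) :
    ∑ lam, g lam = ∑ i, ∑ lam : Fin k → α, g (Fin.cons i lam) := by
  rw [← (Fin.consEquiv fun _ => α).sum_comp, Fintype.sum_prod_type]
  rfl

theorem sum_range_sum_range_sub_telescope {M : Type*} [AddCommGroup M] (G : ℕ → ℕ → M) (N : ℕ) :
    ∑ Z ∈ Finset.range N, ∑ Y ∈ Finset.range (N - Z), (G Y (Z + 1) - G (Y + 1) Z) =
      ∑ X ∈ Finset.range (N + 1), G 0 X - ∑ X ∈ Finset.range (N + 1), G X 0 := by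
  have antidiagonal (X : ℕ) : ∑ Z ∈ Finset.range (X + 1),
      (G (X - Z) (Z + 1) - G (X - Z + 1) Z) = G 0 (X + 1) - G (X + 1) 0 := by
    have telescope := Finset.sum_range_sub (fun Z => G (X + 1 - Z) Z) (X + 1)
    simp only [Nat.sub_self, Nat.sub_zero] at telescope
    refine (Finset.sum_congr rfl fun Z hZ => ?_).trans telescope
    rw [Nat.add_sub_add_right, Nat.sub_add_comm (Finset.mem_range_succ_iff.1 hZ)]
  rw [← Finset.sum_range_diag_flip N fun Z Y => G Y (Z + 1) - G (Y + 1) Z,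
    Finset.sum_congr rfl fun X _ => antidiagonal X, Finset.sum_sub_distrib,
    Finset.sum_range_succ' (G 0), Finset.sum_range_succ' (G · 0), add_sub_add_right_eq_sub]

theorem fderiv_apply_map_of_comp_eq {𝕜 E F : Type*} [NontriviallyNormedField 𝕜]
    [NormedAddCommGroup E] [NormedSpace 𝕜 E] [NormedAddCommGroup F] [NormedSpace 𝕜 F]
    {g : E → F} {A : E →L[𝕜] E} {x : E} (hg : DifferentiableAt 𝕜 g (A x)) (hgA : g ∘ A = g)
    (v : E) : fderiv 𝕜 g (A x) (A v) = fderiv 𝕜 g x v := by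
  conv_rhs => rw [← hgA, fderiv_comp x hg A.differentiableAt, A.fderiv]
  rfl

theorem hasDerivAt_setIntegral_of_continuous {𝕜 X E : Type*} [RCLike 𝕜] [TopologicalSpace X]
    [T2Space X] [MeasurableSpace X] [OpensMeasurableSpace X] [NormedAddCommGroup E]
    [NormedSpace ℝ E] [NormedSpace 𝕜 E] [SecondCountableTopologyEither X E] {μ : Measure X}
    [IsFiniteMeasureOnCompacts μ] {K : Set X} (hK : IsCompact K) {F F' : 𝕜 → X → E}
    (hF : ∀ t, Continuous (F t)) (hF' : Continuous (Function.uncurry F'))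
    (hFF' : ∀ t x, HasDerivAt (F · x) (F' t x) t) (t₀ : 𝕜) :
    HasDerivAt (fun t => ∫ x in K, F t x ∂μ) (∫ x in K, F' t₀ x ∂μ) t₀ := by
  obtain ⟨C, hC⟩ := ((isCompact_closedBall t₀ 1).prod hK).exists_bound_of_continuousOn
    hF'.continuousOn
  have measurable (g : X → E) (hg : Continuous g) : AEStronglyMeasurable g (μ.restrict K) :=
    hg.aestronglyMeasurable
  refine (hasDerivAt_integral_of_dominated_loc_of_deriv_le (bound := fun _ => C)
    (Metric.closedBall_mem_nhds t₀ one_pos) (.of_forall fun t => measurable _ (hF t))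
    ((hF t₀).continuousOn.integrableOn_compact hK) (measurable _ (by fun_prop)) ?_
    (integrableOn_const hK.measure_ne_top) (.of_forall fun x t _ => hFF' t x)).2
  exact ae_restrict_of_forall_mem hK.measurableSet fun x hx t ht => hC (t, x) ⟨ht, hx⟩

end General

section PartialDerivatives

variable {n : ℕ} {F G : (Fin n → ℝ) → ℝ} {x : Fin n → ℝ}

theorem pd_mul (i : Fin n) (hF : DifferentiableAt ℝ F x) (hG : DifferentiableAt ℝ G x) :
    pd i (fun y => F y * G y) x = pd i F x * G x + F x * pd i G x := by
  simp only [pd, fderiv_fun_mul hF hG, add_apply, smul_apply, smul_eq_mul]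
  ring

theorem pd_add (i : Fin n) (hF : DifferentiableAt ℝ F x) (hG : DifferentiableAt ℝ G x) :
    pd i (fun y => F y + G y) x = pd i F x + pd i G x := by
  simp only [pd, fderiv_fun_add hF hG, add_apply]

theorem pd_const_mul (i : Fin n) (c : ℝ) (hF : DifferentiableAt ℝ F x) :
    pd i (fun y => c * F y) x = c * pd i F x := by
  simp only [pd, fderiv_const_mul hF, smul_apply, smul_eq_mul]

theorem pd_sum {ι : Type*} {s : Finset ι} {F : ι → (Fin n → ℝ) → ℝ} (i : Fin n)
    (hF : ∀ j ∈ s, DifferentiableAt ℝ (F j) x) :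
    pd i (fun y => ∑ j ∈ s, F j y) x = ∑ j ∈ s, pd i (F j) x := by
  simp only [pd, fderiv_fun_sum hF, sum_apply]

theorem contDiff_pd {m k : WithTop ℕ∞} (hF : ContDiff ℝ k F) (hmk : m + 1 ≤ k) (i : Fin n) :
    ContDiff ℝ m (pd i F) :=
  (hF.fderiv_right hmk).clm_apply contDiff_const

theorem pd_pd_eq_fderiv_fderiv (hF : ContDiff ℝ 2 F) (i j : Fin n) (x : Fin n → ℝ) :
    pd i (pd j F) x = fderiv ℝ (fderiv ℝ F) x (Pi.single i 1) (Pi.single j 1) := by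
  have hF' : DifferentiableAt ℝ (fderiv ℝ F) x :=
    (hF.fderiv_right (m := 1) le_rfl).differentiable one_ne_zero x
  change fderiv ℝ (fun y => fderiv ℝ F y (Pi.single j 1)) x (Pi.single i 1) = _
  simp [fderiv_clm_apply hF' (differentiableAt_const _)]

theorem pd_comm (hF : ContDiff ℝ 2 F) (i j : Fin n) : pd i (pd j F) = pd j (pd i F) := by
  funext x
  rw [pd_pd_eq_fderiv_fderiv hF, pd_pd_eq_fderiv_fderiv hF]
  exact hF.contDiffAt.isSymmSndFDerivAt (by simp) _ _

theorem contDiff_pds {m k : ℕ} (hF : ContDiff ℝ k F) (l : List (Fin n)) (h : m + l.length ≤ k) :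
    ContDiff ℝ m (pds l F) := by
  induction l generalizing m with
  | nil => exact hF.of_le (mod_cast h)
  | cons i l ih =>
    rw [List.length_cons] at h
    exact contDiff_pd (ih (m := m + 1) (by omega)) (mod_cast le_rfl) i

theorem differentiable_pds {k : ℕ} (hF : ContDiff ℝ k F) (l : List (Fin n)) (h : l.length < k) :
    Differentiable ℝ (pds l F) :=
  (contDiff_pds (m := 1) hF l (by omega)).differentiable (by simp)

theorem pds_eq_of_perm {l l' : List (Fin n)} (h : l.Perm l') (hF : ContDiff ℝ l.length F) :
    pds l F = pds l' F := by
  induction h with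
  | nil => rfl
  | cons i _ ih => exact congrArg (pd i) (ih (hF.of_le (by simp)))
  | swap i j l => exact pd_comm (contDiff_pds (m := 2) hF l (by grind)) _ _
  | trans h _ ih ih' => exact (ih hF).trans (ih' (h.length_eq ▸ hF))

theorem pds_add_const_mul (l : List (Fin n)) (hF : ContDiff ℝ l.length F)
    (hG : ContDiff ℝ l.length G) (c : ℝ) :
    pds l (fun y => F y + c * G y) = fun y => pds l F y + c * pds l G y := by
  induction l with
  | nil => rfl
  | cons i l ih =>
    have hF' := differentiable_pds hF l (by simp)
    have hG' := differentiable_pds hG l (by simp)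
    funext x
    rw [pds, ih (hF.of_le (by simp)) (hG.of_le (by simp)), pd_add i (hF' x) ((hG' x).const_mul c),
      pd_const_mul i c (hG' x)]
    rfl

theorem continuous_sum_pd {J : Fin n → (Fin n → ℝ) → ℝ} (hJ : ∀ i, ContDiff ℝ 1 (J i)) :
    Continuous fun x => ∑ i, pd i (J i) x :=
  continuous_finsetSum _ fun i _ => (contDiff_pd (m := 0) (hJ i) (by simp) i).continuous

open MeasureTheory in
theorem integral_Icc_sum_pd {d : ℕ} {a b : Fin (d + 1) → ℝ} (hab : a ≤ b)
    {J : Fin (d + 1) → (Fin (d + 1) → ℝ) → ℝ} (hJ : ∀ i, ContDiff ℝ 1 (J i)) :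
    ∫ x in Set.Icc a b, ∑ i, pd i (J i) x =
      ∑ i, ((∫ x' in Set.Icc (a ∘ i.succAbove) (b ∘ i.succAbove), J i (i.insertNth (b i) x')) -
        ∫ x' in Set.Icc (a ∘ i.succAbove) (b ∘ i.succAbove), J i (i.insertNth (a i) x')) :=
  integral_divergence_of_hasFDerivAt_off_countable' a b hab J (fun i => fderiv ℝ (J i)) ∅
    Set.countable_empty (fun i => (hJ i).continuous.continuousOn)
    (fun x _ i => ((hJ i).differentiable one_ne_zero x).hasFDerivAt)
    ((continuous_sum_pd hJ).continuousOn.integrableOn_compact isCompact_Icc)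

end PartialDerivatives

section IntegrationByParts

variable {n : ℕ} {P : List (Fin n) → (Fin n → ℝ) → ℝ} {δ : (Fin n → ℝ) → ℝ}

/-- The pairing `(-1)^Y Σ ∂_{μ₁}⋯∂_{μ_Y} P^{μν} ∂_{ν₁}⋯∂_{ν_Z} δ` obtained from
`Σ P^{λ₁…λ_{Y+Z}} ∂_{λ₁}⋯∂_{λ_{Y+Z}} δ` by moving `Y` of the derivatives off `δ`. -/
noncomputable def ibpPairing (P : List (Fin n) → (Fin n → ℝ) → ℝ) (δ : (Fin n → ℝ) → ℝ)
    (Y Z : ℕ) (x : Fin n → ℝ) : ℝ :=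
  (-1) ^ Y * ∑ mu : Fin Y → Fin n, ∑ nu : Fin Z → Fin n,
    pds (List.ofFn mu) (P (List.ofFn mu ++ List.ofFn nu)) x * pds (List.ofFn nu) δ x

/-- The `i`-th component of the flux released when one more derivative is moved off `δ`, turning
`ibpPairing P δ Y (Z + 1)` into `ibpPairing P δ (Y + 1) Z`. -/
noncomputable def ibpFlux (P : List (Fin n) → (Fin n → ℝ) → ℝ) (δ : (Fin n → ℝ) → ℝ)
    (i : Fin n) (Y Z : ℕ) (x : Fin n → ℝ) : ℝ :=
  (-1) ^ Y * ∑ mu : Fin Y → Fin n, ∑ nu : Fin Z → Fin n,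
    pds (List.ofFn mu) (P (i :: (List.ofFn mu ++ List.ofFn nu))) x * pds (List.ofFn nu) δ x

theorem ibpPairing_zero_left (X : ℕ) (x : Fin n → ℝ) :
    ibpPairing P δ 0 X x =
      ∑ lam : Fin X → Fin n, P (List.ofFn lam) x * pds (List.ofFn lam) δ x := by
  simp [ibpPairing, pds]

theorem ibpPairing_zero_right (X : ℕ) (x : Fin n → ℝ) :
    ibpPairing P δ X 0 x =
      (-1) ^ X * (∑ lam : Fin X → Fin n, pds (List.ofFn lam) (P (List.ofFn lam)) x) * δ x := by
  simp [ibpPairing, pds, Finset.sum_mul, mul_assoc]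

theorem contDiff_ibpFlux {m Y Z : ℕ} (hP : ∀ l, ContDiff ℝ (m + Y : ℕ) (P l))
    (hδ : ContDiff ℝ (m + Z : ℕ) δ) (i : Fin n) : ContDiff ℝ m (ibpFlux P δ i Y Z) :=
  contDiff_const.mul <| ContDiff.sum fun _ _ => ContDiff.sum fun _ _ =>
    (contDiff_pds (hP _) _ (by simp)).mul (contDiff_pds hδ _ (by simp))

theorem pd_ibpFlux {Y Z : ℕ} (hP : ∀ l, ContDiff ℝ (1 + Y : ℕ) (P l))
    (hδ : ContDiff ℝ (1 + Z : ℕ) δ) (i : Fin n) (x : Fin n → ℝ) :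
    pd i (ibpFlux P δ i Y Z) x =
      (-1) ^ Y * ∑ mu : Fin Y → Fin n, ∑ nu : Fin Z → Fin n,
        (pds (i :: List.ofFn mu) (P (i :: (List.ofFn mu ++ List.ofFn nu))) x *
            pds (List.ofFn nu) δ x +
          pds (List.ofFn mu) (P (i :: (List.ofFn mu ++ List.ofFn nu))) x *
            pds (i :: List.ofFn nu) δ x) := by
  have hP' (l : List (Fin n)) (mu : Fin Y → Fin n) : Differentiable ℝ (pds (List.ofFn mu) (P l)) :=
    differentiable_pds (hP l) _ (by simp)
  have hδ' (nu : Fin Z → Fin n) : Differentiable ℝ (pds (List.ofFn nu) δ) :=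
    differentiable_pds hδ _ (by simp)
  have hterm (mu : Fin Y → Fin n) (nu : Fin Z → Fin n) : Differentiable ℝ fun y =>
      pds (List.ofFn mu) (P (i :: (List.ofFn mu ++ List.ofFn nu))) y * pds (List.ofFn nu) δ y :=
    (hP' _ mu).mul (hδ' nu)
  have hinner (mu : Fin Y → Fin n) : Differentiable ℝ fun y => ∑ nu : Fin Z → Fin n,
      pds (List.ofFn mu) (P (i :: (List.ofFn mu ++ List.ofFn nu))) y * pds (List.ofFn nu) δ y :=
    Differentiable.fun_sum fun nu _ => hterm mu nu
  unfold ibpFlux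
  rw [pd_const_mul i _ (Differentiable.fun_sum (fun mu _ => hinner mu) x),
    pd_sum i fun mu _ => hinner mu x]
  refine congrArg _ (Finset.sum_congr rfl fun mu _ => ?_)
  rw [pd_sum i fun nu _ => hterm mu nu x]
  exact Finset.sum_congr rfl fun nu _ => pd_mul i (hP' _ mu x) (hδ' nu x)

theorem sum_pd_ibpFlux {Y Z : ℕ} (hP : ∀ l, ContDiff ℝ (1 + Y : ℕ) (P l))
    (hPsymm : ∀ l l', l.Perm l' → P l = P l') (hδ : ContDiff ℝ (1 + Z : ℕ) δ) (x : Fin n → ℝ) :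
    ∑ i, pd i (ibpFlux P δ i Y Z) x = ibpPairing P δ Y (Z + 1) x - ibpPairing P δ (Y + 1) Z x := by
  have pairing_succ_right : ibpPairing P δ Y (Z + 1) x =
      ∑ i, (-1) ^ Y * ∑ mu : Fin Y → Fin n, ∑ nu : Fin Z → Fin n,
        pds (List.ofFn mu) (P (i :: (List.ofFn mu ++ List.ofFn nu))) x *
          pds (i :: List.ofFn nu) δ x := by
    simp only [ibpPairing, sum_pi_fin_succ, List.ofFn_cons, hPsymm _ _ List.perm_middle]
    rw [Finset.sum_comm, Finset.mul_sum]
  have pairing_succ_left : ibpPairing P δ (Y + 1) Z x =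
      -∑ i, (-1) ^ Y * ∑ mu : Fin Y → Fin n, ∑ nu : Fin Z → Fin n,
        pds (i :: List.ofFn mu) (P (i :: (List.ofFn mu ++ List.ofFn nu))) x *
          pds (List.ofFn nu) δ x := by
    simp only [ibpPairing, sum_pi_fin_succ, List.ofFn_cons, List.cons_append]
    rw [← Finset.mul_sum, pow_succ, mul_neg_one, neg_mul]
  rw [pairing_succ_right, pairing_succ_left, sub_neg_eq_add, ← Finset.sum_add_distrib]
  refine Finset.sum_congr rfl fun i _ => ?_
  simp only [pd_ibpFlux hP hδ, Finset.sum_add_distrib]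
  ring

/-- The `i`-th component of the flux released when all derivatives are moved off `δ` in the sum of
the pairings `ibpPairing P δ 0 X` with `X ≤ N`. -/
noncomputable def ibpTotalFlux (P : List (Fin n) → (Fin n → ℝ) → ℝ) (δ : (Fin n → ℝ) → ℝ)
    (N : ℕ) (i : Fin n) (x : Fin n → ℝ) : ℝ :=
  ∑ Z ∈ Finset.range N, ∑ Y ∈ Finset.range (N - Z), ibpFlux P δ i Y Z x

theorem contDiff_ibpFlux_of_lt {N Y Z : ℕ} (hP : ∀ l, ContDiff ℝ N (P l)) (hδ : ContDiff ℝ N δ)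
    (hY : Y < N) (hZ : Z < N) (i : Fin n) : ContDiff ℝ 1 (ibpFlux P δ i Y Z) :=
  contDiff_ibpFlux (m := 1) (fun l => (hP l).of_le (mod_cast (by omega)))
    (hδ.of_le (mod_cast (by omega))) i

theorem contDiff_ibpTotalFlux {N : ℕ} (hP : ∀ l, ContDiff ℝ N (P l)) (hδ : ContDiff ℝ N δ)
    (i : Fin n) : ContDiff ℝ 1 (ibpTotalFlux P δ N i) := by
  refine ContDiff.sum fun Z hZ => ContDiff.sum fun Y hY => ?_
  rw [Finset.mem_range] at hZ hY
  exact contDiff_ibpFlux_of_lt hP hδ (by omega) hZ i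

theorem sum_pd_ibpTotalFlux {N : ℕ} (hP : ∀ l, ContDiff ℝ N (P l))
    (hPsymm : ∀ l l', l.Perm l' → P l = P l') (hδ : ContDiff ℝ N δ) (x : Fin n → ℝ) :
    ∑ i, pd i (ibpTotalFlux P δ N i) x =
      ∑ X ∈ Finset.range (N + 1), ibpPairing P δ 0 X x -
        ∑ X ∈ Finset.range (N + 1), ibpPairing P δ X 0 x := by
  have hflux {Z Y : ℕ} (hZ : Z ∈ Finset.range N) (hY : Y ∈ Finset.range (N - Z)) (i : Fin n) :
      Differentiable ℝ (ibpFlux P δ i Y Z) := by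
    rw [Finset.mem_range] at hZ hY
    exact (contDiff_ibpFlux_of_lt hP hδ (by omega) hZ i).differentiable one_ne_zero
  have pd_total (i : Fin n) : pd i (ibpTotalFlux P δ N i) x =
      ∑ Z ∈ Finset.range N, ∑ Y ∈ Finset.range (N - Z), pd i (ibpFlux P δ i Y Z) x := by
    unfold ibpTotalFlux
    rw [pd_sum i fun Z hZ => Differentiable.fun_sum (fun Y hY => hflux hZ hY i) x]
    exact Finset.sum_congr rfl fun Z hZ => pd_sum i fun Y hY => hflux hZ hY i x
  rw [← sum_range_sum_range_sub_telescope fun Y Z => ibpPairing P δ Y Z x,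
    Finset.sum_congr rfl fun i _ => pd_total i, Finset.sum_comm]
  refine Finset.sum_congr rfl fun Z hZ => ?_
  rw [Finset.sum_comm]
  refine Finset.sum_congr rfl fun Y hY => ?_
  rw [Finset.mem_range] at hZ hY
  exact sum_pd_ibpFlux (fun l => (hP l).of_le (mod_cast (by omega))) hPsymm
    (hδ.of_le (mod_cast (by omega))) x

end IntegrationByParts

section Jets

variable {n f N : ℕ} {L : (Fin n → ℝ) → Jet n f N → ℝ} {Φ δΦ : Fin f → (Fin n → ℝ) → ℝ}

theorem JIdx.length_le (idx : JIdx n f N) : (List.ofFn idx.2.2).length ≤ N := by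
  rw [List.length_ofFn]
  exact Nat.le_of_lt_succ idx.1.isLt

theorem contDiff_jet {m : ℕ} (hΦ : ∀ B, ContDiff ℝ (m + N : ℕ) (Φ B)) :
    ContDiff ℝ m (fun x => (jet Φ x : Jet n f N)) :=
  contDiff_pi.2 fun idx => contDiff_pds (hΦ _) _ (Nat.add_le_add_left idx.length_le m)

theorem continuous_jet (hΦ : ∀ B, ContDiff ℝ N (Φ B)) :
    Continuous fun x => (jet Φ x : Jet n f N) :=
  (contDiff_jet (m := 0) (by simpa using hΦ)).continuous

theorem jet_add_const_mul (hΦ : ∀ B, ContDiff ℝ N (Φ B)) (hδΦ : ∀ B, ContDiff ℝ N (δΦ B)) (ε : ℝ)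
    (x : Fin n → ℝ) :
    (jet (fun B x' => Φ B x' + ε * δΦ B x') x : Jet n f N) = jet Φ x + ε • jet δΦ x := by
  funext idx
  have hlen : ((List.ofFn idx.2.2).length : WithTop ℕ∞) ≤ N := mod_cast idx.length_le
  exact congrFun (pds_add_const_mul _ ((hΦ _).of_le hlen) ((hδΦ _).of_le hlen) ε) x

theorem contDiff_dLdq {m : ℕ} (hL : ContDiff ℝ (m + 1 : ℕ) (Function.uncurry L))
    (hΦ : ∀ B, ContDiff ℝ (m + N : ℕ) (Φ B)) (idx : JIdx n f N) : ContDiff ℝ m (dLdq L Φ idx) :=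
  (ContDiff.fderiv hL (contDiff_jet hΦ) (by simp)).clm_apply contDiff_const

theorem fderiv_jet_apply (x : Fin n → ℝ) (v : Jet n f N) :
    fderiv ℝ (L x) (jet Φ x) v = ∑ idx, dLdq L Φ idx x * v idx := by
  conv_lhs => rw [← Finset.univ_sum_single v, map_sum]
  refine Finset.sum_congr rfl fun idx _ => ?_
  rw [← mul_one (v idx), ← smul_eq_mul, Pi.single_smul, map_smul, smul_eq_mul, smul_eq_mul,
    mul_one, mul_comm, dLdq]

theorem hasDerivAt_integral_lagrangian (hL : ContDiff ℝ 1 (Function.uncurry L))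
    (hΦ : ∀ B, ContDiff ℝ N (Φ B)) (hδΦ : ∀ B, ContDiff ℝ N (δΦ B))
    {μ : MeasureTheory.Measure (Fin n → ℝ)} [MeasureTheory.IsFiniteMeasureOnCompacts μ]
    {K : Set (Fin n → ℝ)} (hK : IsCompact K) :
    HasDerivAt (fun ε : ℝ => ∫ x in K, L x (jet (fun B x' => Φ B x' + ε * δΦ B x') x) ∂μ)
      (∫ x in K, fderiv ℝ (L x) (jet Φ x) (jet δΦ x) ∂μ) 0 := by
  have hjet : Continuous fun x => (jet Φ x : Jet n f N) := continuous_jet hΦ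
  have hδjet : Continuous fun x => (jet δΦ x : Jet n f N) := continuous_jet hδΦ
  have hLx (x : Fin n → ℝ) : Differentiable ℝ (L x) :=
    (hL.comp (contDiff_prodMk_right x)).differentiable one_ne_zero
  have fderiv_cont : Continuous fun p : (Fin n → ℝ) × Jet n f N => fderiv ℝ (L p.1) p.2 :=
    (ContDiff.fderiv (m := 1) (n := 0) (f := fun p : (Fin n → ℝ) × Jet n f N => L p.1)
      (hL.comp ((contDiff_fst.comp contDiff_fst).prodMk contDiff_snd)) contDiff_snd
      (by simp)).continuous
  have jet_add_zero_smul (x : Fin n → ℝ) :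
      (jet Φ x + (0 : ℝ) • jet δΦ x : Jet n f N) = jet Φ x := by
    rw [zero_smul, add_zero]
  have hasDerivAt_line (x : Fin n → ℝ) (ε : ℝ) :
      HasDerivAt (fun ε : ℝ => (jet Φ x + ε • jet δΦ x : Jet n f N)) (jet δΦ x) ε := by
    simpa using ((hasDerivAt_id ε).smul_const (jet δΦ x)).const_add (jet Φ x)
  simp only [jet_add_const_mul hΦ hδΦ]
  refine (hasDerivAt_setIntegral_of_continuous hK
    (F' := fun ε x => fderiv ℝ (L x) (jet Φ x + ε • jet δΦ x) (jet δΦ x))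
    (fun ε => hL.continuous.comp (continuous_id.prodMk (by fun_prop)))
    ((fderiv_cont.comp (continuous_snd.prodMk (by fun_prop))).clm_apply (by fun_prop))
    (fun ε x => (hLx x _).hasFDerivAt.comp_hasDerivAt ε (hasDerivAt_line x ε)) 0).congr_deriv
    (congrArg _ (funext fun x => ?_))
  exact congrArg (fderiv ℝ (L x) · (jet δΦ x)) (jet_add_zero_smul x)

/-- `permJet X σ` as a continuous linear map, through which the symmetry of `L` is differentiated
by the chain rule. -/
noncomputable def permJetCLM (X : Fin (N + 1)) (σ : Equiv.Perm (Fin (X : ℕ))) :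
    Jet n f N →L[ℝ] Jet n f N :=
  LinearMap.toContinuousLinearMap
    { toFun := permJet X σ
      map_add' := fun p q => by
        funext idx
        simp only [permJet, Pi.add_apply]
        split_ifs <;> rfl
      map_smul' := fun c q => by
        funext idx
        simp only [permJet, Pi.smul_apply]
        split_ifs <;> rfl }

theorem permJet_jet (hΦ : ∀ B, ContDiff ℝ N (Φ B)) (X : Fin (N + 1))
    (σ : Equiv.Perm (Fin (X : ℕ))) (x : Fin n → ℝ) :
    permJet X σ (jet Φ x : Jet n f N) = jet Φ x := by
  funext ⟨Y, B, mu⟩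
  unfold permJet
  split_ifs with h
  · obtain rfl : Y = X := h
    refine congrFun (pds_eq_of_perm (σ.ofFn_comp_perm mu) ((hΦ B).of_le ?_)) x
    exact mod_cast JIdx.length_le ⟨Y, B, mu ∘ σ⟩
  · rfl

theorem permJet_single (X : Fin (N + 1)) (σ : Equiv.Perm (Fin (X : ℕ))) (B : Fin f)
    (lam : Fin (X : ℕ) → Fin n) :
    permJet X σ (Pi.single (⟨X, B, lam ∘ σ⟩ : JIdx n f N) (1 : ℝ)) =
      (Pi.single ⟨X, B, lam⟩ 1 : Jet n f N) := by
  funext ⟨Y, B', mu⟩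
  unfold permJet
  split_ifs with h
  · obtain rfl : Y = X := h
    have comp_eq_iff : mu ∘ σ = lam ∘ σ ↔ mu = lam := σ.surjective.injective_comp_right.eq_iff
    simp only [Pi.single_apply, Sigma.mk.injEq, heq_eq_eq, true_and, Prod.mk.injEq]
    exact if_congr (and_congr_right fun _ => comp_eq_iff) rfl rfl
  · have hne (nu : Fin (X : ℕ) → Fin n) : (⟨Y, B', mu⟩ : JIdx n f N) ≠ ⟨X, B, nu⟩ :=
      fun e => h (congrArg Sigma.fst e)
    rw [Pi.single_eq_of_ne (hne _), Pi.single_eq_of_ne (hne _)]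

theorem dLdq_comp_perm (hL : ∀ x, Differentiable ℝ (L x)) (hΦ : ∀ B, ContDiff ℝ N (Φ B))
    {X : Fin (N + 1)} {σ : Equiv.Perm (Fin (X : ℕ))} (hLσ : ∀ x q, L x (permJet X σ q) = L x q)
    (B : Fin f) (lam : Fin (X : ℕ) → Fin n) :
    dLdq L Φ ⟨X, B, lam ∘ σ⟩ = dLdq L Φ ⟨X, B, lam⟩ := by
  funext x
  have chain_rule := fderiv_apply_map_of_comp_eq (A := permJetCLM X σ) (hL x _) (funext (hLσ x))
    (x := jet Φ x) (Pi.single (⟨X, B, lam ∘ σ⟩ : JIdx n f N) 1)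
  change fderiv ℝ (L x) (permJet X σ (jet Φ x)) (permJet X σ (Pi.single _ 1)) = _ at chain_rule
  rw [permJet_jet hΦ, permJet_single] at chain_rule
  exact chain_rule.symm

/-- The coefficient `∂L/∂q^X_{B,λ₁…λ_X}` along the jet of `Φ`, indexed by the list `[λ₁, …, λ_X]`
instead of a tuple so that multi-indices can be concatenated without casts; it is `0` for lists
longer than the order `N`. -/
noncomputable def dLdqList (L : (Fin n → ℝ) → Jet n f N → ℝ) (Φ : Fin f → (Fin n → ℝ) → ℝ)
    (B : Fin f) (l : List (Fin n)) : (Fin n → ℝ) → ℝ :=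
  if h : l.length < N + 1 then dLdq L Φ ⟨⟨l.length, h⟩, B, l.get⟩ else 0

theorem dLdqList_ofFn {k : ℕ} (hk : k < N + 1) (B : Fin f) (lam : Fin k → Fin n) :
    dLdqList L Φ B (List.ofFn lam) = dLdq L Φ ⟨⟨k, hk⟩, B, lam⟩ := by
  generalize hl : List.ofFn lam = l
  obtain rfl : l.length = k := by rw [← hl, List.length_ofFn]
  obtain rfl : lam = l.get := List.ofFn_injective (hl.trans (List.ofFn_get l).symm)
  exact dif_pos hk

theorem dLdqList_eq_of_perm (hL : ∀ x, Differentiable ℝ (L x)) (hΦ : ∀ B, ContDiff ℝ N (Φ B))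
    (hLsymm : ∀ (x : Fin n → ℝ) (q : Jet n f N) (X : Fin (N + 1))
      (σ : Equiv.Perm (Fin (X : ℕ))), L x (permJet X σ q) = L x q)
    (B : Fin f) {l l' : List (Fin n)} (h : l.Perm l') :
    dLdqList L Φ B l = dLdqList L Φ B l' := by
  by_cases hl : l.length < N + 1
  · obtain ⟨k, u, rfl⟩ : ∃ k, ∃ u : Fin k → Fin n, List.ofFn u = l := ⟨_, _, List.ofFn_get l⟩
    obtain ⟨k', v, rfl⟩ : ∃ k, ∃ v : Fin k → Fin n, List.ofFn v = l' := ⟨_, _, List.ofFn_get l'⟩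
    obtain rfl : k = k' := by simpa only [List.length_ofFn] using h.length_eq
    obtain ⟨σ, rfl⟩ := exists_eq_comp_perm_of_ofFn_perm h
    rw [List.length_ofFn] at hl
    rw [dLdqList_ofFn hl, dLdqList_ofFn hl]
    exact dLdq_comp_perm (X := ⟨k, hl⟩) hL hΦ (fun x q => hLsymm x q ⟨k, hl⟩ σ) B v
  · rw [dLdqList, dLdqList, dif_neg hl, dif_neg (h.length_eq ▸ hl)]

theorem contDiff_dLdqList {m : ℕ} (hL : ContDiff ℝ (m + 1 : ℕ) (Function.uncurry L))
    (hΦ : ∀ B, ContDiff ℝ (m + N : ℕ) (Φ B)) (B : Fin f) (l : List (Fin n)) :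
    ContDiff ℝ m (dLdqList L Φ B l) := by
  unfold dLdqList
  split_ifs
  · exact contDiff_dLdq hL hΦ _
  · exact contDiff_const

theorem fderiv_jet_jet_eq_sum_ibpPairing (x : Fin n → ℝ) :
    fderiv ℝ (L x) (jet Φ x) (jet δΦ x) =
      ∑ B, ∑ X ∈ Finset.range (N + 1), ibpPairing (dLdqList L Φ B) (δΦ B) 0 X x := by
  simp only [fderiv_jet_apply, Fintype.sum_sigma, Fintype.sum_prod_type]
  rw [Finset.sum_comm]
  refine Finset.sum_congr rfl fun B _ => ?_
  rw [Finset.sum_range]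
  refine Finset.sum_congr rfl fun X _ => ?_
  rw [ibpPairing_zero_left]
  refine Finset.sum_congr rfl fun lam _ => ?_
  rw [dLdqList_ofFn X.isLt]
  rfl

theorem mul_eulerLagrange_eq_sum_ibpPairing (B : Fin f) (δ : (Fin n → ℝ) → ℝ) (x : Fin n → ℝ) :
    δ x * EulerLagrange L Φ B x =
      ∑ X ∈ Finset.range (N + 1), ibpPairing (dLdqList L Φ B) δ X 0 x := by
  rw [Finset.sum_range, EulerLagrange, Finset.mul_sum]
  refine Finset.sum_congr rfl fun X _ => ?_
  rw [ibpPairing_zero_right, ← Finset.mul_sum, mul_left_comm, mul_comm (δ x)]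
  simp only [dLdqList_ofFn X.isLt]
  exact (mul_assoc _ _ _).symm

/-- The `i`-th component `Σ_B Σ_Z ∂_ν δΦ_B K^{Biν}` of the current whose outward flux is the
boundary term of the first variation. -/
noncomputable def boundaryCurrent (L : (Fin n → ℝ) → Jet n f N → ℝ)
    (Φ δΦ : Fin f → (Fin n → ℝ) → ℝ) (i : Fin n) (x : Fin n → ℝ) : ℝ :=
  ∑ B : Fin f, ∑ Z : Fin N, ∑ nu : Fin (Z : ℕ) → Fin n,
    pds (List.ofFn nu) (δΦ B) x * Kcur L Φ B i Z nu x

theorem sum_pds_mul_Kcur_eq_sum_ibpFlux (B : Fin f) (δ : (Fin n → ℝ) → ℝ) (i : Fin n) (Z : Fin N)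
    (x : Fin n → ℝ) :
    ∑ nu : Fin (Z : ℕ) → Fin n, pds (List.ofFn nu) δ x * Kcur L Φ B i Z nu x =
      ∑ Y ∈ Finset.range (N - Z), ibpFlux (dLdqList L Φ B) δ i Y Z x := by
  have coeff (Y : Fin (N - Z)) (mu : Fin Y → Fin n) (nu : Fin (Z : ℕ) → Fin n) :
      dLdqList L Φ B (i :: (List.ofFn mu ++ List.ofFn nu)) =
        dLdq L Φ ⟨⟨1 + Y + Z, by omega⟩, B, Fin.append (Fin.append (fun _ => i) mu) nu⟩ := by
    rw [← dLdqList_ofFn, List.ofFn_fin_append, List.ofFn_fin_append]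
    simp
  simp only [Kcur, Finset.sum_range, ibpFlux, coeff, Finset.mul_sum]
  rw [Finset.sum_comm]
  refine Finset.sum_congr rfl fun _ _ => ?_
  rw [Finset.sum_comm]
  refine Finset.sum_congr rfl fun mu _ => Finset.sum_congr rfl fun nu _ => ?_
  ring

theorem boundaryCurrent_eq_sum_ibpTotalFlux (i : Fin n) :
    boundaryCurrent L Φ δΦ i = fun x => ∑ B, ibpTotalFlux (dLdqList L Φ B) (δΦ B) N i x := by
  funext x
  simp only [boundaryCurrent, sum_pds_mul_Kcur_eq_sum_ibpFlux]
  exact Finset.sum_congr rfl fun B _ => (Finset.sum_range fun Z =>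
    ∑ Y ∈ Finset.range (N - Z), ibpFlux (dLdqList L Φ B) (δΦ B) i Y Z x).symm

theorem contDiff_boundaryCurrent (hL : ContDiff ℝ (N + 1 : ℕ) (Function.uncurry L))
    (hΦ : ∀ B, ContDiff ℝ (N + N : ℕ) (Φ B)) (hδΦ : ∀ B, ContDiff ℝ N (δΦ B)) (i : Fin n) :
    ContDiff ℝ 1 (boundaryCurrent L Φ δΦ i) := by
  rw [boundaryCurrent_eq_sum_ibpTotalFlux]
  exact ContDiff.sum fun B _ => contDiff_ibpTotalFlux (contDiff_dLdqList hL hΦ B) (hδΦ B) i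

theorem continuous_sum_mul_eulerLagrange (hL : ContDiff ℝ (N + 1 : ℕ) (Function.uncurry L))
    (hΦ : ∀ B, ContDiff ℝ (N + N : ℕ) (Φ B)) (hδΦ : ∀ B, Continuous (δΦ B)) :
    Continuous fun x => ∑ B, δΦ B x * EulerLagrange L Φ B x := by
  refine continuous_finsetSum _ fun B _ => (hδΦ B).mul ?_
  refine continuous_finsetSum _ fun X _ => continuous_finsetSum _ fun lam _ =>
    continuous_const.mul ?_
  have hdLdq : ContDiff ℝ N (dLdq L Φ ⟨X, B, lam⟩) :=
    contDiff_dLdq hL hΦ _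
  exact (contDiff_pds (m := 0) hdLdq _ (by simpa using JIdx.length_le ⟨X, B, lam⟩)).continuous

theorem sum_pd_boundaryCurrent (hL : ContDiff ℝ (N + 1 : ℕ) (Function.uncurry L))
    (hLsymm : ∀ (x : Fin n → ℝ) (q : Jet n f N) (X : Fin (N + 1))
      (σ : Equiv.Perm (Fin (X : ℕ))), L x (permJet X σ q) = L x q)
    (hΦ : ∀ B, ContDiff ℝ (N + N : ℕ) (Φ B)) (hδΦ : ∀ B, ContDiff ℝ N (δΦ B)) (x : Fin n → ℝ) :
    ∑ i, pd i (boundaryCurrent L Φ δΦ i) x =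
      fderiv ℝ (L x) (jet Φ x) (jet δΦ x) - ∑ B, δΦ B x * EulerLagrange L Φ B x := by
  have hLx (x : Fin n → ℝ) : Differentiable ℝ (L x) :=
    (hL.comp (contDiff_prodMk_right x)).differentiable (by simp)
  have hΦN (B : Fin f) : ContDiff ℝ N (Φ B) := (hΦ B).of_le (mod_cast Nat.le_add_left N N)
  have hP (B : Fin f) := contDiff_dLdqList hL hΦ B
  have pd_current (i : Fin n) : pd i (boundaryCurrent L Φ δΦ i) x =
      ∑ B, pd i (ibpTotalFlux (dLdqList L Φ B) (δΦ B) N i) x := by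
    rw [boundaryCurrent_eq_sum_ibpTotalFlux]
    exact pd_sum i fun B _ =>
      (contDiff_ibpTotalFlux (hP B) (hδΦ B) i).differentiable one_ne_zero x
  rw [Finset.sum_congr rfl fun i _ => pd_current i, Finset.sum_comm,
    fderiv_jet_jet_eq_sum_ibpPairing, ← Finset.sum_sub_distrib]
  refine Finset.sum_congr rfl fun B _ => ?_
  rw [mul_eulerLagrange_eq_sum_ibpPairing]
  exact sum_pd_ibpTotalFlux (hP B) (fun _ _ h => dLdqList_eq_of_perm hLx hΦN hLsymm B h) (hδΦ B) x

end Jets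

theorem gateaux_derivative_of_action_general {d f N : ℕ}
    (L : (Fin (d + 1) → ℝ) → Jet (d + 1) f N → ℝ)
    (hL : ContDiff ℝ (N + 1 : ℕ) (fun p : (Fin (d + 1) → ℝ) × Jet (d + 1) f N => L p.1 p.2))
    (hLsymm : ∀ (x : Fin (d + 1) → ℝ) (q : Jet (d + 1) f N) (X : Fin (N + 1))
      (σ : Equiv.Perm (Fin (X : ℕ))), L x (permJet X σ q) = L x q)
    (Φ δΦ : Fin f → (Fin (d + 1) → ℝ) → ℝ)
    (hΦ : ∀ B, ContDiff ℝ (N + N : ℕ) (Φ B)) (hδΦ : ∀ B, ContDiff ℝ N (δΦ B))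
    (a b : Fin (d + 1) → ℝ) (hab : a ≤ b) :
    HasDerivAt (fun ε : ℝ =>
        ∫ x in Set.Icc a b, L x (jet (fun B x' => Φ B x' + ε * δΦ B x') x))
      ((∫ x in Set.Icc a b, ∑ B : Fin f, δΦ B x * EulerLagrange L Φ B x)
        + ∑ i : Fin (d + 1),
            ((∫ x' in Set.Icc (a ∘ i.succAbove) (b ∘ i.succAbove),
                ∑ B : Fin f, ∑ Z : Fin N, ∑ nu : Fin (Z : ℕ) → Fin (d + 1),
                  pds (List.ofFn nu) (δΦ B) (i.insertNth (b i) x')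
                    * Kcur L Φ B i Z nu (i.insertNth (b i) x'))
             - (∫ x' in Set.Icc (a ∘ i.succAbove) (b ∘ i.succAbove),
                ∑ B : Fin f, ∑ Z : Fin N, ∑ nu : Fin (Z : ℕ) → Fin (d + 1),
                  pds (List.ofFn nu) (δΦ B) (i.insertNth (a i) x')
                    * Kcur L Φ B i Z nu (i.insertNth (a i) x')))) 0 := by
  have action_deriv := hasDerivAt_integral_lagrangian (μ := MeasureTheory.volume)
    (hL.of_le (mod_cast Nat.le_add_left 1 N))
    (fun B => (hΦ B).of_le (mod_cast Nat.le_add_left N N)) hδΦ (isCompact_Icc (a := a) (b := b))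
  have first_variation (x : Fin (d + 1) → ℝ) : fderiv ℝ (L x) (jet Φ x) (jet δΦ x) =
      ∑ B, δΦ B x * EulerLagrange L Φ B x + ∑ i, pd i (boundaryCurrent L Φ δΦ i) x :=
    eq_add_of_sub_eq' (sum_pd_boundaryCurrent hL hLsymm hΦ hδΦ x).symm
  have hEL := continuous_sum_mul_eulerLagrange hL hΦ fun B => (hδΦ B).continuous
  have hJ := contDiff_boundaryCurrent hL hΦ hδΦ
  refine action_deriv.congr_deriv ?_
  simp only [first_variation]
  rw [MeasureTheory.integral_add (hEL.continuousOn.integrableOn_compact isCompact_Icc)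
    ((continuous_sum_pd hJ).continuousOn.integrableOn_compact isCompact_Icc),
    integral_Icc_sum_pd hab hJ]
  rfl

/-- equation (3)/(7) of the paper: for a closed axis-aligned box
`Ω = Icc a b ⊂ ℝⁿ` (`n = d+1 ≥ 2`), the Gateaux derivative of the action
`F[Φ] = ∫_Ω L(x, jet Φ(x)) dx` in the direction of a smooth variation `δΦ`
equals the integral of the Euler–Lagrange expression contracted with `δΦ`
plus the boundary (outward-flux) term over `∂Ω`, the latter written as the sum
over the `2(d+1)` faces of the box. -/
theorem gateaux_derivative_of_action {d f N : ℕ} (hd : 1 ≤ d) (hf : 1 ≤ f) (hN : 1 ≤ N)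
    (L : (Fin (d + 1) → ℝ) → Jet (d + 1) f N → ℝ)
    (hL : ContDiff ℝ (⊤ : ℕ∞) (fun p : (Fin (d + 1) → ℝ) × Jet (d + 1) f N => L p.1 p.2))
    (hLsymm : ∀ (x : Fin (d + 1) → ℝ) (q : Jet (d + 1) f N) (X : Fin (N + 1))
      (σ : Equiv.Perm (Fin (X : ℕ))), L x (permJet X σ q) = L x q)
    (Φ δΦ : Fin f → (Fin (d + 1) → ℝ) → ℝ)
    (hΦ : ∀ B, ContDiff ℝ (⊤ : ℕ∞) (Φ B)) (hδΦ : ∀ B, ContDiff ℝ (⊤ : ℕ∞) (δΦ B))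
    (a b : Fin (d + 1) → ℝ) (hab : a ≤ b) :
    deriv (fun ε : ℝ =>
        ∫ x in Set.Icc a b, L x (jet (fun B x' => Φ B x' + ε * δΦ B x') x)) 0
      = (∫ x in Set.Icc a b, ∑ B : Fin f, δΦ B x * EulerLagrange L Φ B x)
        + ∑ i : Fin (d + 1),
            ((∫ x' in Set.Icc (a ∘ i.succAbove) (b ∘ i.succAbove),
                ∑ B : Fin f, ∑ Z : Fin N, ∑ nu : Fin (Z : ℕ) → Fin (d + 1),
                  pds (List.ofFn nu) (δΦ B) (i.insertNth (b i) x')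
                    * Kcur L Φ B i Z nu (i.insertNth (b i) x'))
             - (∫ x' in Set.Icc (a ∘ i.succAbove) (b ∘ i.succAbove),
                ∑ B : Fin f, ∑ Z : Fin N, ∑ nu : Fin (Z : ℕ) → Fin (d + 1),
                  pds (List.ofFn nu) (δΦ B) (i.insertNth (a i) x')
                    * Kcur L Φ B i Z nu (i.insertNth (a i) x'))) :=
  (gateaux_derivative_of_action_general L (contDiff_infty.1 hL (N + 1)) hLsymm Φ δΦ
    (fun B => contDiff_infty.1 (hΦ B) (N + N)) (fun B => contDiff_infty.1 (hδΦ B) N) a b hab).deriv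
end

section
/- Proposition (Appendix B, equation (B2)): the Noether current remainder I transforms as a vector. Let y : ℝ⁴ → ℝ⁴ be a smooth diffeomorphism with smooth inverse. Let g_x, g_y be smooth maps from ℝ⁴ to invertible symmetric real 4×4 matrices related tensorially by g_{x,αβ}(x) = (∂y^μ/∂x^α)(x)(∂y^ν/∂x^β)(x) g_{y,μν}(y(x)), and let v_x, v_y be smooth symmetric 4×4 matrix fields related tensorially by v_{x,αβ}(x) = (∂y^μ/∂x^α)(x)(∂y^ν/∂x^β)(x) v_{y,μν}(y(x)). In each coordinate system, with g^{αβ} the entries of the pointwise inverse metric, define D^{κμαβ} := ½(g^{ακ}g^{βμ} + g^{αμ}g^{βκ}) − g^{αβ}g^{κμ}; Γ_μ := ½ Σ g^{νρ} ∂_μ g_{νρ}; C^{καβμξη} := −½ g^{αξ}g^{βμ}g^{κη} + ½ g^{αμ}g^{βξ}g^{κη} − ½ g^{αξ}g^{βκ}g^{μη} − ½ g^{ακ}g^{βξ}g^{μη} + ½ g^{αξ}g^{βη}g^{κμ} + g^{ακ}g^{βμ}g^{ξη} − ½ g^{αβ}g^{κμ}g^{ξη}; and the current I^κ := [ Σ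 C^{καβμξη} ∂_μ g_{ξη} − Σ Γ_μ D^{κμαβ} ] v_{αβ} + Σ D^{κμαβ} ∂_μ v_{αβ}. Then I_y^λ(y(x)) = Σ_κ (∂y^λ/∂x^κ)(x) · I_x^κ(x) for every x ∈ ℝ⁴, i.e. I transforms as a (1,0)-tensor even though its individual summands do not. -/
open scoped BigOperators

/-- The Jacobian matrix `(Dy(x))^λ_κ = ∂y^λ/∂x^κ` of a map `y : ℝⁿ → ℝⁿ`. -/
noncomputable def jac {n : ℕ} (y : (Fin n → ℝ) → (Fin n → ℝ)) (x : Fin n → ℝ) :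
    Matrix (Fin n) (Fin n) ℝ :=
  Matrix.of fun lam kap => pd kap (fun x' => y x' lam) x

/-- `∂R/∂(∂_κ∂_μ g_{αβ}) = ½(g^{ακ}g^{βμ} + g^{αμ}g^{βκ}) − g^{αβ}g^{κμ}`
(equation (B4) of the paper), for a metric field `g`. -/
noncomputable def Dco (g : (Fin 4 → ℝ) → Matrix (Fin 4) (Fin 4) ℝ)
    (x : Fin 4 → ℝ) (κ μ α β : Fin 4) : ℝ :=
  (1 / 2 : ℝ) * ((g x)⁻¹ α κ * (g x)⁻¹ β μ + (g x)⁻¹ α μ * (g x)⁻¹ β κ)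
    - (g x)⁻¹ α β * (g x)⁻¹ κ μ

/-- The contracted Christoffel symbol `Γ^ν_{νμ} = ½ g^{νρ} ∂_μ g_{νρ}`. -/
noncomputable def Gam (g : (Fin 4 → ℝ) → Matrix (Fin 4) (Fin 4) ℝ)
    (x : Fin 4 → ℝ) (μ : Fin 4) : ℝ :=
  (1 / 2 : ℝ) * ∑ ν : Fin 4, ∑ ρ : Fin 4, (g x)⁻¹ ν ρ * pd μ (fun x' => g x' ν ρ) x

/-- The coefficient `C^{καβμξη}` of equation (B7) of the paper. -/
noncomputable def Cco (g : (Fin 4 → ℝ) → Matrix (Fin 4) (Fin 4) ℝ)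
    (x : Fin 4 → ℝ) (κ α β μ ξ η : Fin 4) : ℝ :=
  -(1 / 2 : ℝ) * (g x)⁻¹ α ξ * (g x)⁻¹ β μ * (g x)⁻¹ κ η
    + (1 / 2 : ℝ) * (g x)⁻¹ α μ * (g x)⁻¹ β ξ * (g x)⁻¹ κ η
    - (1 / 2 : ℝ) * (g x)⁻¹ α ξ * (g x)⁻¹ β κ * (g x)⁻¹ μ η
    - (1 / 2 : ℝ) * (g x)⁻¹ α κ * (g x)⁻¹ β ξ * (g x)⁻¹ μ η
    + (1 / 2 : ℝ) * (g x)⁻¹ α ξ * (g x)⁻¹ β η * (g x)⁻¹ κ μ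
    + (g x)⁻¹ α κ * (g x)⁻¹ β μ * (g x)⁻¹ ξ η
    - (1 / 2 : ℝ) * (g x)⁻¹ α β * (g x)⁻¹ κ μ * (g x)⁻¹ ξ η

/-- The metric part `I^κ` of the Noether current (equation (B1) of the paper), built
from a metric field `g` and a symmetric matrix field `v` (representing `δ̄g`). -/
noncomputable def Icur (g v : (Fin 4 → ℝ) → Matrix (Fin 4) (Fin 4) ℝ)
    (x : Fin 4 → ℝ) (κ : Fin 4) : ℝ :=
  (∑ α : Fin 4, ∑ β : Fin 4,
    ((∑ μ : Fin 4, ∑ ξ : Fin 4, ∑ η : Fin 4,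
        Cco g x κ α β μ ξ η * pd μ (fun x' => g x' ξ η) x)
      - ∑ μ : Fin 4, Gam g x μ * Dco g x κ μ α β) * v x α β)
    + ∑ μ : Fin 4, ∑ α : Fin 4, ∑ β : Fin 4,
        Dco g x κ μ α β * pd μ (fun x' => v x' α β) x

/-!
For the Levi-Civita connection `∇` of `g` one has `I^κ = D^{κμαβ} ∇_μ v_{αβ}`: torsion-freeness
turns the Christoffel symbols contracted with the derivative index into traces, and
metric compatibility expresses the remaining ones through `∂g`. The connection pulled back along
`y`, including its inhomogeneous second-derivative term, is again torsion-free and metric for the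
pulled-back metric. Hence `∇v` is a tensor, and so is its contraction with `D`.
-/

open scoped Matrix

section LinearAlgebra

variable {n R : Type*} [CommRing R]

/-- The covariant derivative `∇_μ w_{αβ} = ∂_μ w_{αβ} − Γ^λ_{μα} w_{λβ} − Γ^λ_{μβ} w_{αλ}` at a
point, in terms of the value `w` and the partial derivatives `dw μ = ∂_μ w`. A connection is encoded
as a family of matrices with `Γ μ lam ν` standing for `Γ^lam_{μν}`. -/
def covDeriv [Fintype n] (Γ : n → Matrix n n R) (w : Matrix n n R) (dw : n → Matrix n n R) (μ : n) :
    Matrix n n R :=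
  dw μ - ((Γ μ)ᵀ * w + w * Γ μ)

/-- Symmetry of the connection coefficients, `Γ^lam_{μν} = Γ^lam_{νμ}`; for the second derivatives
`H μ lam ν` of a coordinate change it expresses equality of mixed partials. -/
def IsTorsionFree (Γ : n → Matrix n n R) : Prop :=
  ∀ μ lam ν, Γ μ lam ν = Γ ν lam μ

/-- `Γ` is the Levi-Civita connection at a point where the metric is `g` and its partial
derivatives are `dg μ = ∂_μ g`. -/
structure IsLeviCivita [Fintype n] (Γ : n → Matrix n n R) (g : Matrix n n R)
    (dg : n → Matrix n n R) : Prop where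
  torsionFree : IsTorsionFree Γ
  covDeriv_metric : covDeriv Γ g dg = 0

/-- The Christoffel symbols of the metric `g` with partial derivatives `dg μ = ∂_μ g`. -/
noncomputable def christoffel [Fintype n] [DecidableEq n] [Invertible (2 : R)] (g : Matrix n n R)
    (dg : n → Matrix n n R) (μ : n) : Matrix n n R :=
  g⁻¹ * Matrix.of fun ρ ν => ⅟2 * (dg μ ρ ν + dg ν ρ μ - dg ρ μ ν)

/-- The pointwise contraction `S ↦ D^{κμαβ} S_{αβ}` for symmetric `G` and `S`, where `G` is the
inverse metric; up to a density factor `D` is the DeWitt metric. -/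
def deWitt [Fintype n] (G S : Matrix n n R) : Matrix n n R :=
  G * S * G - (G * S).trace • G

/-- The contraction `N_μ^{κμ}` of the derivative index of `N` with its last index. -/
def contractDeriv [Fintype n] (N : n → Matrix n n R) (κ : n) : R :=
  ∑ μ, N μ κ μ

/-- The pullback of a covariant rank-three tensor `S l a b = S_{lab}` along the Jacobian `J`. -/
def pullbackTensor [Fintype n] (J : Matrix n n R) (S : n → Matrix n n R) (μ : n) : Matrix n n R :=
  Jᵀ * (∑ l, J l μ • S l) * J

/-- The transformation law of a connection under a coordinate change with Jacobian `J` and second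
derivatives `H μ lam ν = ∂²y^lam/∂x^μ∂x^ν`. -/
noncomputable def pullbackConnection [Fintype n] [DecidableEq n] (J : Matrix n n R)
    (H Γ : n → Matrix n n R) (μ : n) : Matrix n n R :=
  J⁻¹ * ((∑ l, J l μ • Γ l) * J + H μ)

theorem isLeviCivita_christoffel [Fintype n] [DecidableEq n] [Invertible (2 : R)]
    {g : Matrix n n R} {dg : n → Matrix n n R} (hdet : IsUnit g.det) (hg : g.IsSymm)
    (hdg : ∀ μ, (dg μ).IsSymm) : IsLeviCivita (christoffel g dg) g dg where
  torsionFree μ lam ν := by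
    simp only [christoffel, Matrix.mul_apply, Matrix.of_apply, (hdg _).apply μ ν,
      add_comm (dg μ _ ν)]
  covDeriv_metric := by
    have lower (μ : n) : g * christoffel g dg μ
        = Matrix.of fun ρ ν => ⅟2 * (dg μ ρ ν + dg ν ρ μ - dg ρ μ ν) :=
      Matrix.mul_nonsing_inv_cancel_left _ _ hdet
    have lower' (μ : n) : (christoffel g dg μ)ᵀ * g = (g * christoffel g dg μ)ᵀ := by
      rw [Matrix.transpose_mul, hg.eq]
    ext μ α β
    simp only [covDeriv, lower', lower, Matrix.sub_apply, Matrix.add_apply, Matrix.transpose_apply,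
      Matrix.of_apply, Pi.zero_apply, Matrix.zero_apply, (hdg μ).apply α β, (hdg α).apply μ β,
      (hdg β).apply α μ]
    linear_combination (-dg μ α β) * mul_invOf_self (2 : R)

section Contraction

variable [Fintype n]

theorem sum_sum_mul_apply_mul (A B S : Matrix n n R) (a b : n) :
    ∑ α, ∑ β, A a α * B β b * S α β = (A * S * B) a b := by
  simp only [Matrix.mul_apply, Finset.sum_mul, mul_right_comm]
  exact Finset.sum_comm

theorem sum_sum_apply_mul_apply {A : Matrix n n R} (hA : A.IsSymm) (S : Matrix n n R) :
    ∑ α, ∑ β, A α β * S α β = (A * S).trace := by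
  simp only [Matrix.trace, Matrix.diag_apply, Matrix.mul_apply]
  rw [Finset.sum_comm]
  exact Finset.sum_congr rfl fun i _ => Finset.sum_congr rfl fun j _ => by rw [hA.apply i j]

theorem mulVec_contractDeriv (J : Matrix n n R) (N : n → Matrix n n R) :
    J *ᵥ contractDeriv N = contractDeriv (fun μ => J * N μ) := by
  ext κ
  simp only [contractDeriv, Matrix.mulVec, dotProduct, Matrix.mul_apply, Finset.mul_sum]
  exact Finset.sum_comm

theorem deWitt_sub (G S T : Matrix n n R) : deWitt G (S - T) = deWitt G S - deWitt G T := by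
  simp only [deWitt, mul_sub, sub_mul, Matrix.trace_sub, sub_smul]
  abel

theorem IsTorsionFree.contractDeriv_mul_transpose_mul {Γ : n → Matrix n n R}
    (hΓ : IsTorsionFree Γ) (M N : Matrix n n R) :
    contractDeriv (fun μ => M * ((Γ μ)ᵀ * N))
      = contractDeriv (fun μ => ((Γ μ)ᵀ * N).trace • M) := by
  ext κ
  simp only [contractDeriv, Matrix.mul_apply, Matrix.trace, Matrix.diag_apply,
    Matrix.smul_apply, smul_eq_mul, Matrix.transpose_apply, Finset.mul_sum, Finset.sum_mul]
  rw [Finset.sum_comm]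
  refine Finset.sum_congr rfl fun a _ => Finset.sum_congr rfl fun μ _ =>
    Finset.sum_congr rfl fun b _ => ?_
  rw [hΓ μ b a, mul_comm]

end Contraction

section LeviCivita

variable [Fintype n] {g v : Matrix n n R} {Γ dg : n → Matrix n n R}

theorem IsLeviCivita.deriv_metric (hΓ : IsLeviCivita Γ g dg) (μ : n) :
    dg μ = (Γ μ)ᵀ * g + g * Γ μ :=
  sub_eq_zero.1 (congrFun hΓ.covDeriv_metric μ)

variable [DecidableEq n]

theorem trace_transpose_mul_mul_inv (hg : g.IsSymm) (hv : v.IsSymm) (A : Matrix n n R) :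
    (Aᵀ * (v * g⁻¹)).trace = (g⁻¹ * v * A).trace := by
  rw [← Matrix.trace_transpose]
  simp only [Matrix.transpose_mul, Matrix.transpose_transpose, hg.inv.eq, hv.eq]

theorem trace_inv_mul_transpose_mul_add_mul (hg : g.IsSymm) (hv : v.IsSymm)
    (A : Matrix n n R) :
    (g⁻¹ * (Aᵀ * v + v * A)).trace = 2 * (g⁻¹ * v * A).trace := by
  rw [mul_add, Matrix.trace_add, Matrix.trace_mul_comm, mul_assoc,
    trace_transpose_mul_mul_inv hg hv, ← mul_assoc, two_mul]

namespace IsLeviCivita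

theorem trace_inv_mul_deriv_metric (hΓ : IsLeviCivita Γ g dg) (hdet : IsUnit g.det)
    (hg : g.IsSymm) (μ : n) : (g⁻¹ * dg μ).trace = 2 * (Γ μ).trace := by
  rw [hΓ.deriv_metric, trace_inv_mul_transpose_mul_add_mul hg hg, Matrix.nonsing_inv_mul _ hdet,
    one_mul]

theorem sandwich_mul_deriv_metric (hΓ : IsLeviCivita Γ g dg) (hdet : IsUnit g.det)
    (v : Matrix n n R) (μ : n) :
    g⁻¹ * v * g⁻¹ * dg μ = g⁻¹ * (v * g⁻¹ * (Γ μ)ᵀ * g + v * Γ μ) := by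
  rw [hΓ.deriv_metric, mul_add, mul_assoc _ g⁻¹ (g * Γ μ),
    Matrix.nonsing_inv_mul_cancel_left _ _ hdet]
  noncomm_ring

theorem trace_sandwich_mul_deriv_metric (hΓ : IsLeviCivita Γ g dg) (hdet : IsUnit g.det)
    (hg : g.IsSymm) (hv : v.IsSymm) (μ : n) :
    (g⁻¹ * v * g⁻¹ * dg μ).trace = 2 * (g⁻¹ * v * Γ μ).trace := by
  rw [hΓ.sandwich_mul_deriv_metric hdet, mul_add, Matrix.trace_add, Matrix.trace_mul_comm,
    Matrix.mul_nonsing_inv_cancel_right _ _ hdet, Matrix.trace_mul_comm,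
    trace_transpose_mul_mul_inv hg hv, ← mul_assoc, two_mul]

theorem contractDeriv_deWitt_covDeriv [Invertible (2 : R)] (hΓ : IsLeviCivita Γ g dg)
    (hdet : IsUnit g.det) (hg : g.IsSymm) (hv : v.IsSymm) (dv : n → Matrix n n R) :
    contractDeriv (fun μ => deWitt g⁻¹ (covDeriv Γ v dv μ))
      = contractDeriv (fun μ =>
          (⅟2 * (g⁻¹ * v * g⁻¹ * dg μ).trace) • g⁻¹ - g⁻¹ * v * g⁻¹ * dg μ * g⁻¹
            + (⅟2 * (g⁻¹ * dg μ).trace) • (g⁻¹ * v * g⁻¹) + deWitt g⁻¹ (dv μ)) := by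
  have hcov (μ : n) : deWitt g⁻¹ (covDeriv Γ v dv μ)
      = deWitt g⁻¹ (dv μ) + (g⁻¹ * v * Γ μ).trace • g⁻¹ + (g⁻¹ * v * Γ μ).trace • g⁻¹
        - g⁻¹ * v * Γ μ * g⁻¹ - g⁻¹ * ((Γ μ)ᵀ * (v * g⁻¹)) := by
    rw [covDeriv, deWitt_sub, deWitt, deWitt, trace_inv_mul_transpose_mul_add_mul hg hv,
      two_mul, add_smul]
    noncomm_ring
  have hpartial (μ : n) : g⁻¹ * v * g⁻¹ * dg μ * g⁻¹
      = g⁻¹ * v * g⁻¹ * (Γ μ)ᵀ + g⁻¹ * v * Γ μ * g⁻¹ := by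
    rw [hΓ.sandwich_mul_deriv_metric hdet, mul_assoc _ _ g⁻¹, add_mul,
      Matrix.mul_nonsing_inv_cancel_right _ _ hdet]
    noncomm_ring
  have hdiv := hΓ.torsionFree.contractDeriv_mul_transpose_mul g⁻¹ (v * g⁻¹)
  have hdiv' := hΓ.torsionFree.contractDeriv_mul_transpose_mul (g⁻¹ * v * g⁻¹) 1
  simp only [trace_transpose_mul_mul_inv hg hv, mul_one, Matrix.trace_transpose] at hdiv hdiv'
  ext κ
  have hdivκ := congrFun hdiv κ
  have hdivκ' := congrFun hdiv' κ
  simp only [contractDeriv, hcov, hpartial, hΓ.trace_sandwich_mul_deriv_metric hdet hg hv,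
    hΓ.trace_inv_mul_deriv_metric hdet hg, invOf_mul_cancel_left', Matrix.add_apply,
    Matrix.sub_apply, Matrix.smul_apply, smul_eq_mul, Finset.sum_add_distrib,
    Finset.sum_sub_distrib] at hdivκ hdivκ' ⊢
  linear_combination -hdivκ + hdivκ'

end IsLeviCivita

end LeviCivita

theorem mulVec_contractDeriv_pullback [Fintype n] [DecidableEq n] {J : Matrix n n R}
    (hJ : IsUnit J.det) (N : n → Matrix n n R) :
    J *ᵥ contractDeriv (fun μ => J⁻¹ * (∑ l, J l μ • N l) * J⁻¹ᵀ) = contractDeriv N := by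
  have hT : J⁻¹ᵀ * Jᵀ = 1 := by
    rw [← Matrix.transpose_mul, Matrix.mul_nonsing_inv J hJ, Matrix.transpose_one]
  ext κ
  calc (J *ᵥ contractDeriv fun μ => J⁻¹ * (∑ l, J l μ • N l) * J⁻¹ᵀ) κ
      = contractDeriv (fun μ => (∑ l, J l μ • N l) * J⁻¹ᵀ) κ := by
        simp only [mulVec_contractDeriv, mul_assoc, Matrix.mul_nonsing_inv_cancel_left _ _ hJ]
    _ = ∑ l, ∑ μ, (N l * J⁻¹ᵀ) κ μ * Jᵀ μ l := by
        simp only [contractDeriv, Finset.sum_mul, Matrix.sum_apply, Matrix.smul_mul,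
          Matrix.smul_apply, smul_eq_mul, Matrix.transpose_apply J, mul_comm]
        exact Finset.sum_comm
    _ = contractDeriv N κ := by
        simp only [← Matrix.mul_apply, mul_assoc, hT, mul_one, contractDeriv]

theorem deWitt_inv_congr [Fintype n] [DecidableEq n] {J : Matrix n n R} (hJ : IsUnit J.det)
    (g S : Matrix n n R) :
    deWitt (Jᵀ * g * J)⁻¹ (Jᵀ * S * J) = J⁻¹ * deWitt g⁻¹ S * J⁻¹ᵀ := by
  have hT : J⁻¹ᵀ * Jᵀ = 1 := by
    rw [← Matrix.transpose_mul, Matrix.mul_nonsing_inv J hJ, Matrix.transpose_one]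
  have hinv : (Jᵀ * g * J)⁻¹ = J⁻¹ * g⁻¹ * J⁻¹ᵀ := by
    rw [Matrix.mul_inv_rev, Matrix.mul_inv_rev, ← Matrix.transpose_nonsing_inv, mul_assoc]
  have hraise : (Jᵀ * g * J)⁻¹ * (Jᵀ * S * J) = J⁻¹ * (g⁻¹ * S) * J := by
    rw [hinv, show J⁻¹ * g⁻¹ * J⁻¹ᵀ * (Jᵀ * S * J) = J⁻¹ * g⁻¹ * (J⁻¹ᵀ * Jᵀ) * S * J by
      noncomm_ring, hT]
    noncomm_ring
  rw [deWitt, hraise, Matrix.trace_mul_comm, Matrix.mul_nonsing_inv_cancel_left _ _ hJ, hinv,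
    show J⁻¹ * (g⁻¹ * S) * J * (J⁻¹ * g⁻¹ * J⁻¹ᵀ)
      = J⁻¹ * (g⁻¹ * S) * (J * J⁻¹) * g⁻¹ * J⁻¹ᵀ by noncomm_ring, Matrix.mul_nonsing_inv _ hJ,
    deWitt, mul_sub, sub_mul, Matrix.mul_smul, Matrix.smul_mul, mul_one]
  noncomm_ring

theorem mulVec_contractDeriv_deWitt_pullbackTensor [Fintype n] [DecidableEq n] {J : Matrix n n R}
    (hJ : IsUnit J.det) (g : Matrix n n R) (S : n → Matrix n n R) :
    J *ᵥ contractDeriv (fun μ => deWitt (Jᵀ * g * J)⁻¹ (pullbackTensor J S μ))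
      = contractDeriv (fun μ => deWitt g⁻¹ (S μ)) := by
  have deWitt_sum (μ : n) : deWitt g⁻¹ (∑ l, J l μ • S l) = ∑ l, J l μ • deWitt g⁻¹ (S l) := by
    simp only [deWitt, Finset.mul_sum, Finset.sum_mul, Matrix.mul_smul, Matrix.smul_mul,
      Matrix.trace_sum, Matrix.trace_smul, Finset.sum_smul, smul_sub, Finset.sum_sub_distrib,
      smul_eq_mul, mul_smul]
  simp only [pullbackTensor, deWitt_inv_congr hJ, deWitt_sum, mulVec_contractDeriv_pullback hJ]

section PullbackConnection

variable [Fintype n] [DecidableEq n] {J : Matrix n n R} {H Γ : n → Matrix n n R}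

theorem isTorsionFree_pullbackConnection (hΓ : IsTorsionFree Γ) (hH : IsTorsionFree H) :
    IsTorsionFree (pullbackConnection J H Γ) := by
  have hsum (μ a ν : n) : ((∑ l, J l μ • Γ l) * J) a ν = ((∑ l, J l ν • Γ l) * J) a μ := by
    simp only [Matrix.mul_apply, Matrix.sum_apply, Matrix.smul_apply, smul_eq_mul, Finset.sum_mul]
    rw [Finset.sum_comm]
    refine Finset.sum_congr rfl fun l _ => Finset.sum_congr rfl fun m _ => ?_
    rw [hΓ m a l]
    ring
  intro μ lam ν
  simp only [pullbackConnection, Matrix.mul_apply (M := J⁻¹), Matrix.add_apply, hsum μ _ ν,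
    hH μ _ ν]

theorem covDeriv_pullbackConnection (hJ : IsUnit J.det) (w : Matrix n n R)
    (dw : n → Matrix n n R) :
    covDeriv (pullbackConnection J H Γ) (Jᵀ * w * J)
        (fun μ => (H μ)ᵀ * w * J + pullbackTensor J dw μ + Jᵀ * w * H μ)
      = pullbackTensor J (covDeriv Γ w dw) := by
  ext1 μ
  have hcancel : J * pullbackConnection J H Γ μ = (∑ l, J l μ • Γ l) * J + H μ :=
    Matrix.mul_nonsing_inv_cancel_left _ _ hJ
  have hcov : ∑ l, J l μ • covDeriv Γ w dw l
      = ∑ l, J l μ • dw l - ((∑ l, J l μ • Γ l)ᵀ * w + w * ∑ l, J l μ • Γ l) := by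
    simp only [covDeriv, smul_sub, smul_add, Finset.sum_sub_distrib, Finset.sum_add_distrib,
      Matrix.transpose_sum, Matrix.transpose_smul, Finset.sum_mul, Finset.mul_sum, Matrix.smul_mul,
      Matrix.mul_smul]
  rw [covDeriv, mul_assoc (Jᵀ * w) J, hcancel, mul_assoc Jᵀ w J, ← mul_assoc _ Jᵀ,
    ← Matrix.transpose_mul, hcancel, pullbackTensor, pullbackTensor, hcov, Matrix.transpose_add,
    Matrix.transpose_mul]
  noncomm_ring

theorem isLeviCivita_pullbackConnection {g : Matrix n n R} {dg : n → Matrix n n R}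
    (hΓ : IsLeviCivita Γ g dg) (hJ : IsUnit J.det) (hH : IsTorsionFree H) :
    IsLeviCivita (pullbackConnection J H Γ) (Jᵀ * g * J)
      (fun μ => (H μ)ᵀ * g * J + pullbackTensor J dg μ + Jᵀ * g * H μ) where
  torsionFree := isTorsionFree_pullbackConnection hΓ.torsionFree hH
  covDeriv_metric := by
    rw [covDeriv_pullbackConnection hJ, hΓ.covDeriv_metric]
    ext1 μ
    simp [pullbackTensor]

end PullbackConnection

end LinearAlgebra

section PartialDerivatives

variable {m : ℕ} {ι κ τ : Type*}

/-- The entrywise partial derivative `∂_μ A` of a matrix field `A` at `x`. -/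
noncomputable def pdMatrix (A : (Fin m → ℝ) → Matrix ι κ ℝ) (x : Fin m → ℝ) (μ : Fin m) :
    Matrix ι κ ℝ :=
  Matrix.of fun a b => pd μ (fun x' => A x' a b) x

/-- The pullback of a field of bilinear forms `w` along `y`. -/
noncomputable def pullbackForm (y : (Fin m → ℝ) → (Fin m → ℝ))
    (w : (Fin m → ℝ) → Matrix (Fin m) (Fin m) ℝ) (x : Fin m → ℝ) : Matrix (Fin m) (Fin m) ℝ :=
  (jac y x)ᵀ * w (y x) * jac y x

theorem isSymm_pdMatrix {w : (Fin m → ℝ) → Matrix ι ι ℝ} (hw : ∀ x, (w x).IsSymm)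
    (x : Fin m → ℝ) (μ : Fin m) : (pdMatrix w x μ).IsSymm := by
  ext a b
  simp only [pdMatrix, Matrix.transpose_apply, Matrix.of_apply, (hw _).apply]

theorem eq_pullbackForm {y : (Fin m → ℝ) → (Fin m → ℝ)}
    {w w' : (Fin m → ℝ) → Matrix (Fin m) (Fin m) ℝ}
    (h : ∀ x α β, w' x α β = ∑ μ, ∑ ν, jac y x μ α * jac y x ν β * w (y x) μ ν) :
    w' = pullbackForm y w := by
  ext x α β
  rw [h, pullbackForm, ← sum_sum_mul_apply_mul]
  rfl

theorem isSymm_pullbackForm {y : (Fin m → ℝ) → (Fin m → ℝ)}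
    {w : (Fin m → ℝ) → Matrix (Fin m) (Fin m) ℝ} (hw : ∀ z, (w z).IsSymm) (x : Fin m → ℝ) :
    (pullbackForm y w x).IsSymm := by
  simp only [pullbackForm, Matrix.IsSymm, Matrix.transpose_mul, Matrix.transpose_transpose,
    (hw _).eq, mul_assoc]

theorem pdMatrix_mul [Fintype κ] {A : (Fin m → ℝ) → Matrix ι κ ℝ}
    {B : (Fin m → ℝ) → Matrix κ τ ℝ} {x : Fin m → ℝ}
    (hA : ∀ a b, DifferentiableAt ℝ (fun x' => A x' a b) x)
    (hB : ∀ a b, DifferentiableAt ℝ (fun x' => B x' a b) x) (μ : Fin m) :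
    pdMatrix (fun x' => A x' * B x') x μ = pdMatrix A x μ * B x + A x * pdMatrix B x μ := by
  ext a c
  simp only [pdMatrix, pd, Matrix.add_apply, Matrix.mul_apply, Matrix.of_apply]
  rw [fderiv_fun_sum fun b _ => (hA a b).fun_mul (hB b c), _root_.sum_apply,
    ← Finset.sum_add_distrib]
  refine Finset.sum_congr rfl fun b _ => ?_
  rw [fderiv_fun_mul (hA a b) (hB b c)]
  simp only [_root_.add_apply, _root_.smul_apply, smul_eq_mul]
  ring

theorem pd_comp {y : (Fin m → ℝ) → (Fin m → ℝ)} {f : (Fin m → ℝ) → ℝ} {x : Fin m → ℝ}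
    (hf : DifferentiableAt ℝ f (y x)) (hy : DifferentiableAt ℝ y x) (μ : Fin m) :
    pd μ (fun x' => f (y x')) x = ∑ l, jac y x l μ * pd l f (y x) := by
  have hjac (l : Fin m) : jac y x l μ = fderiv ℝ y x (Pi.single μ 1) l := by
    simp only [jac, pd, Matrix.of_apply, fderiv_apply hy]
    rfl
  calc pd μ (fun x' => f (y x')) x
      = fderiv ℝ f (y x) (fderiv ℝ y x (Pi.single μ 1)) :=
        DFunLike.congr_fun (fderiv_comp x hf hy) _
    _ = fderiv ℝ f (y x) (∑ l, jac y x l μ • Pi.single l 1) := by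
        simp only [hjac, ← pi_eq_sum_univ']
    _ = ∑ l, jac y x l μ * pd l f (y x) := by
        simp only [map_sum, map_smul, smul_eq_mul, pd]

theorem pdMatrix_comp {y : (Fin m → ℝ) → (Fin m → ℝ)} {w : (Fin m → ℝ) → Matrix ι κ ℝ}
    {x : Fin m → ℝ} (hw : ∀ a b, DifferentiableAt ℝ (fun z => w z a b) (y x))
    (hy : DifferentiableAt ℝ y x) (μ : Fin m) :
    pdMatrix (fun x' => w (y x')) x μ = ∑ l, jac y x l μ • pdMatrix w (y x) l := by
  ext a b
  simp only [pdMatrix, Matrix.of_apply, pd_comp (hw a b) hy, Matrix.sum_apply, Matrix.smul_apply,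
    smul_eq_mul]

section TwiceDifferentiable

variable {y : (Fin m → ℝ) → (Fin m → ℝ)} {x : Fin m → ℝ}

theorem differentiableAt_fderiv_component (hy : ContDiffAt ℝ 2 y x) (lam : Fin m) :
    DifferentiableAt ℝ (fderiv ℝ fun x' => y x' lam) x :=
  ((contDiffAt_pi.1 hy lam).fderiv_right (m := 1) one_add_one_eq_two.le).differentiableAt
    one_ne_zero

theorem differentiableAt_jac (hy : ContDiffAt ℝ 2 y x) (lam κ : Fin m) :
    DifferentiableAt ℝ (fun x' => jac y x' lam κ) x :=
  (differentiableAt_fderiv_component hy lam).clm_apply (differentiableAt_const _)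

theorem isTorsionFree_pdMatrix_jac (hy : ContDiffAt ℝ 2 y x) :
    IsTorsionFree (pdMatrix (jac y) x) := by
  intro μ lam ν
  have hpd (μ ν : Fin m) : pdMatrix (jac y) x μ lam ν
      = fderiv ℝ (fderiv ℝ fun x' => y x' lam) x (Pi.single μ 1) (Pi.single ν 1) := by
    simp only [pdMatrix, jac, pd, Matrix.of_apply]
    rw [fderiv_clm_apply (differentiableAt_fderiv_component hy lam) (differentiableAt_const _)]
    simp
  rw [hpd, hpd]
  exact (contDiffAt_pi.1 hy lam).isSymmSndFDerivAt
    minSmoothness_of_isRCLikeNormedField.le _ _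

theorem pdMatrix_pullbackForm {w : (Fin m → ℝ) → Matrix (Fin m) (Fin m) ℝ}
    (hy : ContDiffAt ℝ 2 y x) (hw : ∀ a b, DifferentiableAt ℝ (fun z => w z a b) (y x)) :
    pdMatrix (pullbackForm y w) x = fun μ =>
      (pdMatrix (jac y) x μ)ᵀ * w (y x) * jac y x
        + pullbackTensor (jac y x) (pdMatrix w (y x)) μ
        + (jac y x)ᵀ * w (y x) * pdMatrix (jac y) x μ := by
  have hyd : DifferentiableAt ℝ y x := hy.differentiableAt two_ne_zero
  have hJ := differentiableAt_jac hy
  have hwy (a b : Fin m) : DifferentiableAt ℝ (fun x' => w (y x') a b) x := (hw a b).comp x hyd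
  have hJw (a b : Fin m) : DifferentiableAt ℝ (fun x' => ((jac y x')ᵀ * w (y x')) a b) x := by
    simp only [Matrix.mul_apply]
    exact DifferentiableAt.fun_sum fun c _ => (hJ c a).fun_mul (hwy c b)
  ext1 μ
  calc pdMatrix (pullbackForm y w) x μ
      = pdMatrix (fun x' => (jac y x')ᵀ * w (y x')) x μ * jac y x
          + (jac y x)ᵀ * w (y x) * pdMatrix (jac y) x μ := pdMatrix_mul hJw hJ μ
    _ = ((pdMatrix (jac y) x μ)ᵀ * w (y x)
          + (jac y x)ᵀ * ∑ l, jac y x l μ • pdMatrix w (y x) l) * jac y x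
          + (jac y x)ᵀ * w (y x) * pdMatrix (jac y) x μ := by
        rw [pdMatrix_mul (A := fun x' => (jac y x')ᵀ) (fun a b => hJ b a) hwy, pdMatrix_comp hw hyd]
        rfl
    _ = _ := by rw [add_mul]; rfl

end TwiceDifferentiable

end PartialDerivatives

section Current

variable {g v : (Fin 4 → ℝ) → Matrix (Fin 4) (Fin 4) ℝ} {x : Fin 4 → ℝ}

theorem sum_Dco_mul (hg : (g x).IsSymm) {S : Matrix (Fin 4) (Fin 4) ℝ} (hS : S.IsSymm)
    (κ μ : Fin 4) : ∑ α, ∑ β, Dco g x κ μ α β * S α β = deWitt (g x)⁻¹ S κ μ := by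
  have hG := hg.inv
  set G := (g x)⁻¹ with hG_def
  calc ∑ α, ∑ β, Dco g x κ μ α β * S α β
      = (1 / 2 : ℝ) * ((∑ α, ∑ β, G κ α * G β μ * S α β) + ∑ α, ∑ β, G μ α * G β κ * S α β)
          - (∑ α, ∑ β, G α β * S α β) * G κ μ := by
        simp only [Finset.mul_sum, Finset.sum_mul, ← Finset.sum_add_distrib,
          ← Finset.sum_sub_distrib]
        refine Finset.sum_congr rfl fun α _ => Finset.sum_congr rfl fun β _ => ?_
        rw [Dco, ← hG_def, hG.apply κ α, hG.apply μ α]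
        ring
    _ = deWitt G S κ μ := by
        have hGSG : (G * S * G) μ κ = (G * S * G) κ μ := by
          rw [← Matrix.transpose_apply (G * S * G)]
          simp only [Matrix.transpose_mul, hG.eq, hS.eq, mul_assoc]
        rw [sum_sum_mul_apply_mul, sum_sum_mul_apply_mul, hGSG, sum_sum_apply_mul_apply hG, deWitt,
          Matrix.sub_apply, Matrix.smul_apply, smul_eq_mul]
        ring

theorem sum_Cco_mul (hg : (g x).IsSymm) {V : Matrix (Fin 4) (Fin 4) ℝ} (hV : V.IsSymm)
    (κ μ ξ η : Fin 4) :
    ∑ α, ∑ β, Cco g x κ α β μ ξ η * V α β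
      = (1 / 2 : ℝ) * (g x)⁻¹ κ μ * ((g x)⁻¹ * V * (g x)⁻¹) ξ η
        - ((g x)⁻¹ * V * (g x)⁻¹) κ ξ * (g x)⁻¹ η μ
        + (((g x)⁻¹ * V * (g x)⁻¹) κ μ - (1 / 2 : ℝ) * ((g x)⁻¹ * V).trace * (g x)⁻¹ κ μ)
          * (g x)⁻¹ ξ η := by
  have hG := hg.inv
  set G := (g x)⁻¹ with hG_def
  have hW (a b : Fin 4) : (G * V * G) a b = (G * V * G) b a := by
    rw [← Matrix.transpose_apply (G * V * G)]
    simp only [Matrix.transpose_mul, hG.eq, hV.eq, mul_assoc]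
  calc ∑ α, ∑ β, Cco g x κ α β μ ξ η * V α β
      = -(1 / 2 : ℝ) * (∑ α, ∑ β, G ξ α * G β μ * V α β) * G κ η
          + (1 / 2 : ℝ) * (∑ α, ∑ β, G μ α * G β ξ * V α β) * G κ η
          - (1 / 2 : ℝ) * (∑ α, ∑ β, G ξ α * G β κ * V α β) * G μ η
          - (1 / 2 : ℝ) * (∑ α, ∑ β, G κ α * G β ξ * V α β) * G μ η
          + (1 / 2 : ℝ) * (∑ α, ∑ β, G ξ α * G β η * V α β) * G κ μ
          + (∑ α, ∑ β, G κ α * G β μ * V α β) * G ξ η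
          - (1 / 2 : ℝ) * (∑ α, ∑ β, G α β * V α β) * G κ μ * G ξ η := by
        simp only [Finset.mul_sum, Finset.sum_mul, ← Finset.sum_add_distrib,
          ← Finset.sum_sub_distrib]
        refine Finset.sum_congr rfl fun α _ => Finset.sum_congr rfl fun β _ => ?_
        rw [Cco, ← hG_def, hG.apply ξ α, hG.apply μ α, hG.apply κ α]
        ring
    _ = _ := by
        simp only [sum_sum_mul_apply_mul, sum_sum_apply_mul_apply hG]
        rw [hW ξ μ, hW ξ κ, hG.apply η μ]
        ring

theorem Gam_eq_trace (hg : (g x).IsSymm) (μ : Fin 4) :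
    Gam g x μ = (1 / 2 : ℝ) * ((g x)⁻¹ * pdMatrix g x μ).trace := by
  rw [← sum_sum_apply_mul_apply hg.inv]
  rfl

theorem sum_sum_Cco_mul (hg : (g x).IsSymm) {V : Matrix (Fin 4) (Fin 4) ℝ} (hV : V.IsSymm)
    {P : Matrix (Fin 4) (Fin 4) ℝ} (κ μ : Fin 4) :
    ∑ ξ, ∑ η, (∑ α, ∑ β, Cco g x κ α β μ ξ η * V α β) * P ξ η
      = ((1 / 2 : ℝ) * ((g x)⁻¹ * V * (g x)⁻¹ * P).trace) * (g x)⁻¹ κ μ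
        - ((g x)⁻¹ * V * (g x)⁻¹ * P * (g x)⁻¹) κ μ
        + (((g x)⁻¹ * V * (g x)⁻¹) κ μ - (1 / 2 : ℝ) * ((g x)⁻¹ * V).trace * (g x)⁻¹ κ μ)
          * ((g x)⁻¹ * P).trace := by
  have hW : ((g x)⁻¹ * V * (g x)⁻¹).IsSymm := by
    simp only [Matrix.IsSymm, Matrix.transpose_mul, hg.inv.eq, hV.eq, mul_assoc]
  rw [← sum_sum_apply_mul_apply hW, ← sum_sum_apply_mul_apply hg.inv P, ← sum_sum_mul_apply_mul]
  simp only [sum_Cco_mul hg hV, Finset.mul_sum, Finset.sum_mul, ← Finset.sum_add_distrib,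
    ← Finset.sum_sub_distrib]
  exact Finset.sum_congr rfl fun ξ _ => Finset.sum_congr rfl fun η _ => by ring

theorem Icur_eq_sum (g v : (Fin 4 → ℝ) → Matrix (Fin 4) (Fin 4) ℝ) (x : Fin 4 → ℝ) (κ : Fin 4) :
    Icur g v x κ = ∑ μ,
      ((∑ ξ, ∑ η, (∑ α, ∑ β, Cco g x κ α β μ ξ η * v x α β) * pdMatrix g x μ ξ η)
        - Gam g x μ * (∑ α, ∑ β, Dco g x κ μ α β * v x α β)
        + ∑ α, ∑ β, Dco g x κ μ α β * pdMatrix v x μ α β) := by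
  have sum_rotate (f : Fin 4 → Fin 4 → Fin 4 → ℝ) :
      ∑ α, ∑ β, ∑ μ, f α β μ = ∑ μ, ∑ α, ∑ β, f α β μ :=
    (Finset.sum_congr rfl fun _ _ => Finset.sum_comm).trans Finset.sum_comm
  simp only [Icur, sub_mul, Finset.sum_mul, Finset.mul_sum, Finset.sum_add_distrib,
    Finset.sum_sub_distrib, pdMatrix, Matrix.of_apply]
  refine congrArg₂ (· + ·) (congrArg₂ (· - ·) ?_ ?_) rfl
  · rw [sum_rotate]
    refine Finset.sum_congr rfl fun μ _ => ?_
    rw [sum_rotate]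
    refine Finset.sum_congr rfl fun ξ _ => ?_
    rw [sum_rotate]
    simp only [mul_right_comm]
  · rw [sum_rotate]
    simp only [mul_assoc]

theorem Icur_eq_contractDeriv_deWitt {Γ : Fin 4 → Matrix (Fin 4) (Fin 4) ℝ} (hg : (g x).IsSymm)
    (hdet : IsUnit (g x).det) (hv : (v x).IsSymm) (hdv : ∀ μ, (pdMatrix v x μ).IsSymm)
    (hΓ : IsLeviCivita Γ (g x) (pdMatrix g x)) :
    Icur g v x
      = contractDeriv (fun μ => deWitt (g x)⁻¹ (covDeriv Γ (v x) (pdMatrix v x) μ)) := by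
  ext κ
  rw [hΓ.contractDeriv_deWitt_covDeriv hdet hg hv, Icur_eq_sum]
  refine Finset.sum_congr rfl fun μ _ => ?_
  rw [sum_sum_Cco_mul hg hv, Gam_eq_trace hg, sum_Dco_mul hg hv, sum_Dco_mul hg (hdv μ)]
  simp only [deWitt, Matrix.add_apply, Matrix.sub_apply, Matrix.smul_apply, smul_eq_mul,
    invOf_eq_inv]
  ring

end Current

section Transformation

variable {y : (Fin 4 → ℝ) → (Fin 4 → ℝ)} {x : Fin 4 → ℝ}
  {g v : (Fin 4 → ℝ) → Matrix (Fin 4) (Fin 4) ℝ}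

theorem Icur_is_vector_general (hy : ContDiffAt ℝ 2 y x) (hJ : IsUnit (jac y x).det)
    (hg : ∀ α β, DifferentiableAt ℝ (fun z => g z α β) (y x))
    (hv : ∀ α β, DifferentiableAt ℝ (fun z => v z α β) (y x))
    (hgsymm : ∀ z, (g z).IsSymm) (hvsymm : ∀ z, (v z).IsSymm) (hdet : IsUnit (g (y x)).det) :
    Icur g v (y x) = jac y x *ᵥ Icur (pullbackForm y g) (pullbackForm y v) x := by
  have hΓ := isLeviCivita_christoffel hdet (hgsymm (y x)) (isSymm_pdMatrix hgsymm (y x))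
  have hΓ' := isLeviCivita_pullbackConnection hΓ hJ (isTorsionFree_pdMatrix_jac hy)
  rw [← pdMatrix_pullbackForm hy hg] at hΓ'
  have hdet' : IsUnit (pullbackForm y g x).det := by
    simpa only [pullbackForm, Matrix.det_mul, Matrix.det_transpose] using (hJ.mul hdet).mul hJ
  rw [Icur_eq_contractDeriv_deWitt (hgsymm _) hdet (hvsymm _) (isSymm_pdMatrix hvsymm _) hΓ,
    Icur_eq_contractDeriv_deWitt (isSymm_pullbackForm hgsymm x) hdet'
      (isSymm_pullbackForm hvsymm x) (isSymm_pdMatrix (isSymm_pullbackForm hvsymm) x) hΓ',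
    pdMatrix_pullbackForm hy hv, pullbackForm, pullbackForm, covDeriv_pullbackConnection hJ,
    mulVec_contractDeriv_deWitt_pullbackTensor hJ]

end Transformation

/-- Proposition of Appendix B, equation (B2): the metric part `I`
of the Noether current transforms as a (1,0)-tensor under a change of coordinates,
even though its individual summands do not. -/
theorem Icur_is_vector
    (y yinv : (Fin 4 → ℝ) → (Fin 4 → ℝ))
    (hy : ContDiff ℝ (⊤ : ℕ∞) y) (hyinv : ContDiff ℝ (⊤ : ℕ∞) yinv)
    (hleft : Function.LeftInverse yinv y) (hright : Function.RightInverse yinv y)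
    (gx gy vx vy : (Fin 4 → ℝ) → Matrix (Fin 4) (Fin 4) ℝ)
    (hgx : ∀ α β, ContDiff ℝ (⊤ : ℕ∞) fun x => gx x α β)
    (hgy : ∀ α β, ContDiff ℝ (⊤ : ℕ∞) fun z => gy z α β)
    (hvx : ∀ α β, ContDiff ℝ (⊤ : ℕ∞) fun x => vx x α β)
    (hvy : ∀ α β, ContDiff ℝ (⊤ : ℕ∞) fun z => vy z α β)
    (hgxsymm : ∀ x, (gx x).IsSymm) (hgysymm : ∀ z, (gy z).IsSymm)
    (hgxdet : ∀ x, IsUnit (gx x).det) (hgydet : ∀ z, IsUnit (gy z).det)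
    (hvxsymm : ∀ x, (vx x).IsSymm) (hvysymm : ∀ z, (vy z).IsSymm)
    (hgrel : ∀ (x : Fin 4 → ℝ) (α β : Fin 4),
      gx x α β = ∑ μ : Fin 4, ∑ ν : Fin 4, jac y x μ α * jac y x ν β * gy (y x) μ ν)
    (hvrel : ∀ (x : Fin 4 → ℝ) (α β : Fin 4),
      vx x α β = ∑ μ : Fin 4, ∑ ν : Fin 4, jac y x μ α * jac y x ν β * vy (y x) μ ν) :
    ∀ (x : Fin 4 → ℝ) (lam : Fin 4),
      Icur gy vy (y x) lam = ∑ κ : Fin 4, jac y x lam κ * Icur gx vx x κ := by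
  have hgx_eq : gx = pullbackForm y gy := eq_pullbackForm hgrel
  have hvx_eq : vx = pullbackForm y vy := eq_pullbackForm hvrel
  subst hgx_eq hvx_eq
  intro x lam
  have hJ : IsUnit (jac y x).det := by
    have hdet := hgxdet x
    rw [pullbackForm, Matrix.det_mul] at hdet
    exact isUnit_of_mul_isUnit_right hdet
  exact congrFun (Icur_is_vector_general (hy.contDiffAt.of_le (WithTop.coe_le_coe.2 le_top)) hJ
    (fun α β => (hgy α β).differentiable (by simp) _)
    (fun α β => (hvy α β).differentiable (by simp) _) hgysymm hvysymm (hgydet (y x))) lam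
end
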